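/- arXiv:1202.1499 — 3 statements merged into one kernel-verified Lean document; each statement's English description precedes it below -/
import Mathlib

section
/- For any c > 0 there is a constant K such that for all positive integers m and n, the total variation distance between the Binomial(m, c/n) distribution and the Poisson(c) distribution is at most K · max{1, |m − n|}/n. -/
open Filter
open scoped Classical

noncomputable section

/-- The probability mass function of the binomial distribution `Binom(m, p)`. -/
def binomPMF (m : ℕ) (p : ℝ) (j : ℕ) : ℝ := (m.choose j : ℝ) * p ^ j * (1 - p) ^ (m - j)

/-- The probability mass function of the Poisson distribution `Pois(c)`. -/
def poisPMF (c : ℝ) (j : ℕ) : ℝ := Real.exp (-c) * c ^ j / (Nat.factorial j)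

/-- The ℓ¹ norm of the coefficients of a power series. -/
def nrm (f : PowerSeries ℝ) : ENNReal := ∑' j : ℕ, ‖PowerSeries.coeff j f‖ₑ

lemma nrm_add (f g : PowerSeries ℝ) : nrm (f + g) ≤ nrm f + nrm g := by
  unfold nrm
  rw [← ENNReal.tsum_add]
  refine ENNReal.tsum_le_tsum fun j => ?_
  rw [map_add]
  exact enorm_add_le _ _

lemma nrm_neg (f : PowerSeries ℝ) : nrm (-f) = nrm f := by
  unfold nrm
  simp

lemma nrm_mul (f g : PowerSeries ℝ) : nrm (f * g) ≤ nrm f * nrm g := by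
  unfold nrm
  have h : ∀ j, ‖PowerSeries.coeff j (f * g)‖ₑ ≤
      ∑ x ∈ Finset.HasAntidiagonal.antidiagonal j, ‖PowerSeries.coeff x.1 f‖ₑ * ‖PowerSeries.coeff x.2 g‖ₑ := by
    intro j
    rw [PowerSeries.coeff_mul]
    refine (enorm_sum_le _ _).trans (le_of_eq ?_)
    simp [enorm_mul]
  refine (ENNReal.tsum_le_tsum h).trans (le_of_eq ?_)
  rw [← ENNReal.tsum_mul_right]
  simp_rw [← ENNReal.tsum_mul_left]
  rw [← ENNReal.tsum_prod (f := fun a b => ‖PowerSeries.coeff a f‖ₑ * ‖PowerSeries.coeff b g‖ₑ)]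
  rw [← (Finset.HasAntidiagonal.sigmaAntidiagonalEquivProd (A := ℕ)).tsum_eq, ENNReal.tsum_sigma']
  refine tsum_congr fun j => ?_
  rw [tsum_fintype]
  exact (Finset.sum_coe_sort (Finset.HasAntidiagonal.antidiagonal j)
    (fun x => ‖PowerSeries.coeff x.1 f‖ₑ * ‖PowerSeries.coeff x.2 g‖ₑ)).symm

lemma nrm_one : nrm 1 ≤ 1 := by
  unfold nrm
  rw [tsum_eq_single 0]
  · simp
  · intro j hj
    simp [PowerSeries.coeff_one, hj]

lemma nrm_pow (f : PowerSeries ℝ) (hf : nrm f ≤ 1) (m : ℕ) : nrm (f ^ m) ≤ 1 := by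
  induction m with
  | zero => simpa using nrm_one
  | succ k ih =>
    rw [pow_succ]
    exact (nrm_mul _ _).trans (mul_le_one' ih hf)

lemma nrm_pow_sub (f g : PowerSeries ℝ) (hf : nrm f ≤ 1) (hg : nrm g ≤ 1) (m : ℕ) :
    nrm (f ^ m - g ^ m) ≤ m * nrm (f - g) := by
  induction m with
  | zero => simp [nrm]
  | succ k ih =>
    have e : f ^ (k+1) - g ^ (k+1) = (f ^ k - g ^ k) * f + g ^ k * (f - g) := by ring
    rw [e]
    refine (nrm_add _ _).trans ?_
    push_cast
    rw [add_mul, one_mul]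
    refine add_le_add ?_ ?_
    · refine (nrm_mul _ _).trans ?_
      exact (mul_le_of_le_one_right' hf).trans ih
    · exact (nrm_mul _ _).trans (mul_le_of_le_one_left' (nrm_pow g hg k))

lemma nrm_hasSum (f : PowerSeries ℝ) (s : ℝ)
    (h : HasSum (fun j => |PowerSeries.coeff j f|) s) : nrm f = ENNReal.ofReal s := by
  unfold nrm
  rw [← h.tsum_eq, ENNReal.ofReal_tsum_of_nonneg (fun _ => abs_nonneg _) h.summable]
  refine tsum_congr fun j => ?_
  rw [← Real.norm_eq_abs, ofReal_norm]

/-- Generating function of the Poisson distribution. -/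
def poisS (c : ℝ) : PowerSeries ℝ := PowerSeries.mk (poisPMF c)

/-- Generating function of the Bernoulli distribution. -/
def bernS (p : ℝ) : PowerSeries ℝ :=
  PowerSeries.C (1 - p) + PowerSeries.C p * PowerSeries.X

lemma poisS_eq (c : ℝ) : poisS c =
    PowerSeries.C (Real.exp (-c)) * PowerSeries.rescale c (PowerSeries.exp ℝ) := by
  ext j
  simp [poisS, poisPMF, PowerSeries.coeff_exp]
  ring

lemma poisS_add (a b : ℝ) : poisS (a + b) = poisS a * poisS b := by
  rw [poisS_eq, poisS_eq, poisS_eq, ← PowerSeries.exp_mul_exp_eq_exp_add, neg_add, Real.exp_add,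
    map_mul]
  ring

lemma poisS_zero : poisS 0 = 1 := by
  ext j
  rcases j with _ | j <;> simp [poisS, poisPMF, PowerSeries.coeff_one]

lemma poisS_pow (a : ℝ) (m : ℕ) : poisS a ^ m = poisS (m * a) := by
  induction m with
  | zero => simp [poisS_zero]
  | succ k ih =>
    rw [pow_succ, ih, ← poisS_add]
    congr 1
    push_cast
    ring

lemma bernS_pow (p : ℝ) (m j : ℕ) :
    PowerSeries.coeff j (bernS p ^ m) = binomPMF m p j := by
  have e : bernS p ^ m = ∑ k ∈ Finset.range (m + 1),
      PowerSeries.C (p ^ k * (1 - p) ^ (m - k) * (m.choose k : ℝ)) * PowerSeries.X ^ k := by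
    rw [bernS, add_comm, add_pow]
    refine Finset.sum_congr rfl fun k _ => ?_
    rw [mul_pow]
    simp only [map_mul, map_pow, map_natCast]
    ring
  rw [e, map_sum]
  simp only [PowerSeries.coeff_C_mul, PowerSeries.coeff_X_pow, mul_ite, mul_one, mul_zero,
    Finset.sum_ite_eq, Finset.mem_range, binomPMF]
  split_ifs with h
  · ring
  · rw [Nat.choose_eq_zero_of_lt (by omega)]
    simp

lemma pois_hasSum (c : ℝ) : HasSum (poisPMF c) 1 := by
  have h := (NormedSpace.expSeries_div_hasSum_exp (𝔸 := ℝ) c).mul_left (Real.exp (-c))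
  rw [← Real.exp_eq_exp_ℝ, ← Real.exp_add, neg_add_cancel, Real.exp_zero] at h
  refine h.congr_fun ?_ |> fun h => h
  intro j
  simp [poisPMF, mul_div_assoc]

lemma pois_nonneg {c : ℝ} (hc : 0 ≤ c) (j : ℕ) : 0 ≤ poisPMF c j := by
  unfold poisPMF
  positivity

lemma nrm_pois {c : ℝ} (hc : 0 ≤ c) : nrm (poisS c) ≤ 1 := by
  rw [nrm_hasSum _ 1, ENNReal.ofReal_one]
  simpa [poisS, abs_of_nonneg (pois_nonneg hc _)] using pois_hasSum c

lemma nrm_pois_sub_one {d : ℝ} (hd : 0 ≤ d) : nrm (poisS d - 1) ≤ ENNReal.ofReal (2 * d) := by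
  have h := (pois_hasSum d).add (hasSum_ite_eq 0 (1 - 2 * Real.exp (-d)))
  rw [nrm_hasSum _ (1 + (1 - 2 * Real.exp (-d)))]
  · apply ENNReal.ofReal_le_ofReal
    linarith [Real.add_one_le_exp (-d)]
  · convert h using 1
    funext j
    rcases j with _ | j
    · have : Real.exp (-d) ≤ 1 := Real.exp_le_one_iff.2 (by linarith)
      simp [poisS, poisPMF]
      rw [abs_of_nonpos (by linarith)]
      ring
    · simp [poisS, PowerSeries.coeff_one, abs_of_nonneg (pois_nonneg hd _)]

lemma nrm_bern {p : ℝ} (h0 : 0 ≤ p) (h1 : p ≤ 1) : nrm (bernS p) ≤ 1 := by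
  have h := (hasSum_ite_eq 0 (1 - p)).add (hasSum_ite_eq 1 p)
  rw [nrm_hasSum _ (1 - p + p)]
  · simp
  · convert h using 1
    funext j
    rcases j with _ | _ | j
    · simp [bernS]
      linarith
    · simp [bernS, PowerSeries.coeff_C, h0]
    · simp [bernS, PowerSeries.coeff_C, PowerSeries.coeff_X]

lemma nrm_bern_sub {p : ℝ} (h0 : 0 ≤ p) :
    nrm (bernS p - poisS p) ≤ ENNReal.ofReal (2 * p ^ 2) := by
  have h := ((pois_hasSum p).add (hasSum_ite_eq 0 (-(1 - p)))).add
    (hasSum_ite_eq 1 (p - 2 * (p * Real.exp (-p))))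
  have e1 := Real.add_one_le_exp (-p)
  have e2 : Real.exp (-p) ≤ 1 := Real.exp_le_one_iff.2 (by linarith)
  have hh : nrm (bernS p - poisS p) =
      ENNReal.ofReal (1 + -(1 - p) + (p - 2 * (p * Real.exp (-p)))) := by
    apply nrm_hasSum
    convert h using 1
    funext j
    rcases j with _ | _ | j
    · simp [bernS, poisS, poisPMF]
      rw [abs_of_nonpos (by linarith)]
      ring
    · simp [bernS, poisS, poisPMF, PowerSeries.coeff_C]
      rw [abs_of_nonneg (by nlinarith)]
      ring
    · simp [bernS, poisS, PowerSeries.coeff_C, PowerSeries.coeff_X,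
        abs_of_nonneg (pois_nonneg h0 _)]
  rw [hh]
  apply ENNReal.ofReal_le_ofReal
  nlinarith

lemma nrm_pois_le {a b : ℝ} (ha : 0 ≤ a) (hab : a ≤ b) :
    nrm (poisS b - poisS a) ≤ ENNReal.ofReal (2 * |b - a|) := by
  have e : poisS b - poisS a = poisS a * (poisS (b - a) - 1) := by
    rw [mul_sub, ← poisS_add, mul_one]
    congr 2
    ring
  rw [e, abs_of_nonneg (by linarith)]
  refine (nrm_mul _ _).trans ?_
  exact (mul_le_of_le_one_left' (nrm_pois ha)).trans (nrm_pois_sub_one (by linarith))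

lemma nrm_pois_sub {a b : ℝ} (ha : 0 ≤ a) (hb : 0 ≤ b) :
    nrm (poisS b - poisS a) ≤ ENNReal.ofReal (2 * |b - a|) := by
  rcases le_total a b with h | h
  · exact nrm_pois_le ha h
  · rw [← nrm_neg, neg_sub, abs_sub_comm]
    exact nrm_pois_le hb h

lemma tsum_le_of_nrm (f : PowerSeries ℝ) (s : ℝ) (hs : 0 ≤ s) (h : nrm f ≤ ENNReal.ofReal s) :
    ∑' j, |PowerSeries.coeff j f| ≤ s := by
  by_cases hf : Summable (fun j => |PowerSeries.coeff j f|)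
  · rw [nrm_hasSum f _ hf.hasSum] at h
    exact (ENNReal.ofReal_le_ofReal_iff hs).1 h
  · rw [tsum_eq_zero_of_not_summable hf]
    exact hs

/-- For any `c > 0` there is a constant `K` such that for all positive
integers `m`, `n` (with `c ≤ n`, so that `c/n` is a genuine success probability), the total
variation distance between `Binom(m, c/n)` and `Pois(c)` is at most
`K · max{1, |m − n|}/n`. -/
theorem statement10 (c : ℝ) (hc : 0 < c) :
    ∃ K : ℝ, ∀ m n : ℕ, 0 < m → 0 < n → c ≤ n →
      (1 / 2) * ∑' j : ℕ, |binomPMF m (c / n) j - poisPMF c j| ≤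
        K * max 1 |(m : ℝ) - (n : ℝ)| / n := by
  refine ⟨2 * c ^ 2 + c, fun m n hm hn hcn => ?_⟩
  have hn1 : (1 : ℝ) ≤ n := by exact_mod_cast hn
  have hn0 : (0 : ℝ) < n := by linarith
  set p : ℝ := c / n with hp
  have p0 : 0 ≤ p := by positivity
  have p1 : p ≤ 1 := (div_le_one hn0).2 hcn
  have key : nrm (bernS p ^ m - poisS c) ≤
      ENNReal.ofReal (m * (2 * p ^ 2) + 2 * |m * p - c|) := by
    have e : bernS p ^ m - poisS c =
        (bernS p ^ m - poisS p ^ m) + (poisS (m * p) - poisS c) := by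
      rw [poisS_pow]
      ring
    rw [e, ENNReal.ofReal_add (by positivity) (by positivity), ENNReal.ofReal_mul (by positivity),
      ENNReal.ofReal_natCast]
    refine (nrm_add _ _).trans (add_le_add ?_ (nrm_pois_sub hc.le (by positivity)))
    refine (nrm_pow_sub _ _ (nrm_bern p0 p1) (nrm_pois p0) m).trans ?_
    gcongr
    exact nrm_bern_sub p0
  have h := tsum_le_of_nrm _ _ (by positivity) key
  simp only [map_sub, bernS_pow, poisS, PowerSeries.coeff_mk] at h
  set M : ℝ := max 1 |(m : ℝ) - (n : ℝ)| with hM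
  have hM1 : 1 ≤ M := le_max_left _ _
  have hM2 : |(m : ℝ) - n| ≤ M := le_max_right _ _
  have hmM : (m : ℝ) ≤ 2 * (n * M) := by
    have := le_abs_self ((m : ℝ) - n)
    nlinarith
  have b1 : m * p ^ 2 ≤ 2 * c ^ 2 * M / n := by
    rw [hp, div_pow, ← mul_div_assoc, div_le_div_iff₀ (by positivity) hn0]
    have := mul_le_mul_of_nonneg_right hmM (show 0 ≤ c ^ 2 * n by positivity)
    nlinarith
  have b2 : |m * p - c| ≤ c * M / n := by
    have : m * p - c = c * (m - n) / n := by
      rw [hp]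
      field_simp
    rw [this, abs_div, abs_mul, abs_of_pos hc, abs_of_pos hn0]
    gcongr
  have : (2 * c ^ 2 + c) * M / n = 2 * c ^ 2 * M / n + c * M / n := by ring
  rw [this]
  linarith

end
end

section
/- Let ξ_1, ξ_2, … be independent uniform random signs in {+1, −1} and Z_n = n^{−1/2} Σ_{i=1}^n ξ_i. Then for every real s < 1, E[exp(s Z_n^2 / 2)] → 1/√(1 − s) as n → ∞. -/
open Filter
open scoped Classical

noncomputable section

lemma aux_c (s : ℝ) (hs : s < 1) : ∃ c : ℂ, c ^ 2 = (s : ℂ) ∧ c.re ^ 2 < 1 := by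
  rcases le_total 0 s with h | h
  · refine ⟨(Real.sqrt s : ℝ), ?_, ?_⟩
    · rw [← Complex.ofReal_pow, Real.sq_sqrt h]
    · rw [Complex.ofReal_re, Real.sq_sqrt h]; exact hs
  · refine ⟨Complex.I * (Real.sqrt (-s) : ℝ), ?_, ?_⟩
    · rw [mul_pow, ← Complex.ofReal_pow, Real.sq_sqrt (by linarith)]
      simp
    · simp

lemma aux_cosh_norm (w : ℂ) : ‖Complex.cosh w‖ ≤ Real.exp (w.re ^ 2 / 2) := by
  refine le_trans ?_ (Real.cosh_le_exp_half_sq w.re)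
  rw [Complex.cosh, Real.cosh_eq, norm_div]
  have := norm_add_le (Complex.exp w) (Complex.exp (-w))
  rw [Complex.norm_exp, Complex.norm_exp, Complex.neg_re] at this
  simp only [Complex.norm_ofNat]
  linarith

lemma aux_lim (a : ℂ) : Tendsto (fun n : ℕ => Complex.cosh (a / (Real.sqrt n : ℝ)) ^ n) atTop
    (nhds (Complex.exp (a ^ 2 / 2))) := by
  have hd : HasDerivAt (fun t : ℝ => Complex.sinh ((t : ℂ) * (a / 2))) (a / 2) 0 := by
    have h1 : HasDerivAt (fun t : ℂ => Complex.sinh (t * (a / 2))) (a / 2) ((0 : ℝ) : ℂ) := by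
      have := ((hasDerivAt_id ((0 : ℝ) : ℂ)).mul_const (a / 2)).csinh
      simpa using this
    exact h1.comp_ofReal
  have h2 := hd.tendsto_slope_zero
  have h3 : Tendsto (fun n : ℕ => (Real.sqrt n)⁻¹) atTop (nhdsWithin 0 {0}ᶜ) := by
    rw [tendsto_nhdsWithin_iff]
    refine ⟨tendsto_inv_atTop_zero.comp
      (Real.tendsto_sqrt_atTop.comp tendsto_natCast_atTop_atTop), ?_⟩
    filter_upwards [eventually_gt_atTop 0] with n hn
    have : 0 < Real.sqrt n := Real.sqrt_pos.2 (by exact_mod_cast hn)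
    simp [this.ne']
  have h4 := h2.comp h3
  have h5 := (h4.pow 2).const_mul 2
  have h6 : Tendsto (fun n : ℕ => (n : ℂ) * (Complex.cosh (a / (Real.sqrt n : ℝ)) - 1)) atTop
      (nhds (a ^ 2 / 2)) := by
    have e : (2 : ℂ) * (a / 2) ^ 2 = a ^ 2 / 2 := by ring
    rw [e] at h5
    refine h5.congr fun n => ?_
    have hc : Complex.cosh (a / (Real.sqrt n : ℝ)) - 1
        = 2 * Complex.sinh (((Real.sqrt n)⁻¹ : ℝ) * (a / 2)) ^ 2 := by
      have : a / (Real.sqrt n : ℝ) = 2 * ((((Real.sqrt n)⁻¹ : ℝ) : ℂ) * (a / 2)) := by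
        push_cast; ring
      rw [this, Complex.cosh_two_mul, Complex.cosh_sq]; ring
    rw [hc]
    have hn : ((Real.sqrt n : ℝ) : ℂ) ^ 2 = n := by
      rw [← Complex.ofReal_pow, Real.sq_sqrt (Nat.cast_nonneg n)]; simp
    simp only [Function.comp, zero_add, inv_inv, Complex.ofReal_zero, zero_mul, Complex.sinh_zero,
      sub_zero, Complex.real_smul]
    rw [mul_pow, hn]; ring
  have := Complex.tendsto_one_add_pow_exp_of_tendsto h6
  simpa using this

lemma aux_sum (u : ℂ) (n : ℕ) :
    ∑ ξ : Fin n → Bool, Complex.exp (u * ((∑ i : Fin n, if ξ i then (1 : ℝ) else -1 : ℝ) : ℂ))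
      = 2 ^ n * Complex.cosh u ^ n := by
  have h := Finset.prod_univ_sum (fun _ : Fin n => (Finset.univ : Finset Bool))
    (fun _ b => Complex.exp (u * ((if b then (1 : ℝ) else -1 : ℝ) : ℂ)))
  rw [Fintype.piFinset_univ] at h
  rw [← mul_pow]
  have e : (2 * Complex.cosh u) ^ n = ∏ _i : Fin n, ∑ b : Bool,
      Complex.exp (u * ((if b then (1 : ℝ) else -1 : ℝ) : ℂ)) := by
    simp [Complex.cosh]
    ring
  rw [e, h]
  refine Finset.sum_congr rfl fun ξ _ => ?_
  rw [← Complex.exp_sum, Complex.ofReal_sum, Finset.mul_sum]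

lemma aux_gauss (v : ℂ) : MeasureTheory.Integrable
      (fun x : ℝ => Complex.exp (-(x : ℂ) ^ 2 / 2) * Complex.exp (v * x)) ∧
    ∫ x : ℝ, Complex.exp (-(x : ℂ) ^ 2 / 2) * Complex.exp (v * x)
      = (Real.sqrt (2 * Real.pi) : ℝ) * Complex.exp (v ^ 2 / 2) := by
  have hb : (-(1 / 2) : ℂ).re < 0 := by norm_num
  have e : (fun x : ℝ => Complex.exp (-(x : ℂ) ^ 2 / 2) * Complex.exp (v * x))
      = fun x : ℝ => Complex.exp (-(1 / 2) * (x : ℂ) ^ 2 + v * x + 0) := by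
    ext x; rw [← Complex.exp_add]; congr 1; ring
  rw [e]
  refine ⟨integrable_cexp_quadratic' hb v 0, ?_⟩
  rw [integral_cexp_quadratic hb]
  have h1 : (Real.pi : ℂ) / - -(1 / 2) = ((2 * Real.pi : ℝ) : ℂ) := by push_cast; ring
  rw [h1, Real.sqrt_eq_rpow, Complex.ofReal_cpow (by positivity)]
  congr 2
  · push_cast; ring
  · ring

theorem statement15 (s : ℝ) (hs : s < 1) :
    Tendsto (fun n : ℕ =>
        (1 / 2) ^ n * ∑ ξ : Fin n → Bool,
          Real.exp (s * ((∑ i : Fin n, if ξ i then (1 : ℝ) else -1) / Real.sqrt n) ^ 2 / 2))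
      atTop (nhds (1 / Real.sqrt (1 - s))) := by
  obtain ⟨c, hc, hr⟩ := aux_c s hs
  have hpi : (0 : ℝ) < Real.sqrt (2 * Real.pi) := Real.sqrt_pos.2 (by positivity)
  have hpi' : ((Real.sqrt (2 * Real.pi) : ℝ) : ℂ) ≠ 0 := by exact_mod_cast hpi.ne'
  have key : ∀ n : ℕ, (((1 / 2) ^ n * ∑ ξ : Fin n → Bool,
          Real.exp (s * ((∑ i : Fin n, if ξ i then (1 : ℝ) else -1) / Real.sqrt n) ^ 2 / 2) : ℝ) : ℂ)
      = (Real.sqrt (2 * Real.pi) : ℂ)⁻¹ * ∫ x : ℝ, Complex.exp (-(x : ℂ) ^ 2 / 2) *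
        Complex.cosh (c * x / (Real.sqrt n : ℝ)) ^ n := by
    intro n
    have e1 : ∀ x : ℝ, Complex.exp (-(x : ℂ) ^ 2 / 2) * Complex.cosh (c * x / (Real.sqrt n : ℝ)) ^ n
        = ∑ ξ : Fin n → Bool, (1 / 2) ^ n * (Complex.exp (-(x : ℂ) ^ 2 / 2) *
          Complex.exp ((c * (((∑ i : Fin n, if ξ i then (1 : ℝ) else -1) / Real.sqrt n : ℝ) : ℂ)) * x)) := by
      intro x
      rw [← Finset.mul_sum, ← Finset.mul_sum]
      have := aux_sum (c * x / (Real.sqrt n : ℝ)) n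
      have e2 : ∀ ξ : Fin n → Bool,
          (c * (((∑ i : Fin n, if ξ i then (1 : ℝ) else -1) / Real.sqrt n : ℝ) : ℂ)) * x
          = c * x / (Real.sqrt n : ℝ) * ((∑ i : Fin n, if ξ i then (1 : ℝ) else -1 : ℝ) : ℂ) := by
        intro ξ
        rw [Complex.ofReal_div]; ring
      simp_rw [e2]
      rw [this]
      have h2 : ((1 / 2 : ℂ)) ^ n * 2 ^ n = 1 := by rw [← mul_pow]; norm_num
      linear_combination (-(Complex.exp (-(x : ℂ) ^ 2 / 2) *
        Complex.cosh (c * x / (Real.sqrt n : ℝ)) ^ n)) * h2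
    simp_rw [e1]
    rw [MeasureTheory.integral_finsetSum _ (fun ξ _ => (aux_gauss _).1.const_mul _)]
    simp_rw [MeasureTheory.integral_const_mul, (aux_gauss _).2]
    rw [Complex.ofReal_mul, Complex.ofReal_sum, Finset.mul_sum, Finset.mul_sum]
    refine Finset.sum_congr rfl fun ξ _ => ?_
    rw [mul_pow c, hc, Complex.ofReal_exp]
    push_cast
    field_simp
  have hlim : Tendsto (fun n : ℕ => ∫ x : ℝ, Complex.exp (-(x : ℂ) ^ 2 / 2) *
        Complex.cosh (c * x / (Real.sqrt n : ℝ)) ^ n) atTop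
      (nhds (∫ x : ℝ, Complex.exp (-(x : ℂ) ^ 2 / 2) * Complex.exp ((c * x) ^ 2 / 2))) := by
    refine MeasureTheory.tendsto_integral_of_dominated_convergence
      (fun x : ℝ => Real.exp (-((1 - c.re ^ 2) / 2) * x ^ 2)) ?_ ?_ ?_ ?_
    · intro n
      apply Continuous.aestronglyMeasurable
      fun_prop
    · exact integrable_exp_neg_mul_sq (by linarith)
    · intro n
      refine Eventually.of_forall fun x => ?_
      rw [norm_mul, norm_pow, Complex.norm_exp]
      have h1 : (-(x : ℂ) ^ 2 / 2).re = -x ^ 2 / 2 := by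
        have : (-(x : ℂ) ^ 2 / 2) = ((-x ^ 2 / 2 : ℝ) : ℂ) := by push_cast; ring
        rw [this, Complex.ofReal_re]
      have h2 : (c * x / (Real.sqrt n : ℝ)).re = c.re * x / Real.sqrt n := by
        rw [Complex.div_ofReal_re, Complex.re_mul_ofReal]
      have h3 := aux_cosh_norm (c * x / (Real.sqrt n : ℝ))
      rw [h2] at h3
      have h4 := pow_le_pow_left₀ (norm_nonneg _) h3 n
      rw [← Real.exp_nat_mul] at h4
      have h5 : (n : ℝ) * ((c.re * x / Real.sqrt n) ^ 2 / 2) ≤ c.re ^ 2 * x ^ 2 / 2 := by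
        rw [div_pow, Real.sq_sqrt (Nat.cast_nonneg n)]
        rcases Nat.eq_zero_or_pos n with h | h
        · subst h; simp; positivity
        · have : (0 : ℝ) < n := by exact_mod_cast h
          apply le_of_eq; field_simp
      rw [h1]
      calc _ ≤ Real.exp (-x ^ 2 / 2) * Real.exp (c.re ^ 2 * x ^ 2 / 2) := by
            gcongr
            exact h4.trans (Real.exp_le_exp.2 h5)
        _ = _ := by rw [← Real.exp_add]; congr 1; ring
    · exact Eventually.of_forall fun x => (aux_lim (c * x)).const_mul _
  have hval : ∫ x : ℝ, Complex.exp (-(x : ℂ) ^ 2 / 2) * Complex.exp ((c * x) ^ 2 / 2)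
      = ((Real.sqrt (Real.pi / ((1 - s) / 2)) : ℝ) : ℂ) := by
    rw [← integral_gaussian, ← integral_complex_ofReal]
    congr 1; ext x
    rw [← Complex.exp_add, mul_pow, hc]
    push_cast
    congr 1; ring
  have h1 := hlim.const_mul ((Real.sqrt (2 * Real.pi) : ℂ)⁻¹)
  rw [hval] at h1
  have h2 := h1.congr fun n => (key n).symm
  have h3 : (Real.sqrt (2 * Real.pi) : ℂ)⁻¹ * ((Real.sqrt (Real.pi / ((1 - s) / 2)) : ℝ) : ℂ)
      = ((1 / Real.sqrt (1 - s) : ℝ) : ℂ) := by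
    have : Real.pi / ((1 - s) / 2) = (2 * Real.pi) / (1 - s) := by
      have : 1 - s ≠ 0 := by linarith
      field_simp
    rw [this, Real.sqrt_div (by positivity)]
    push_cast
    field_simp
  rw [h3] at h2
  have h4 := (Complex.continuous_re.tendsto _).comp h2
  simpa only [Function.comp_def, Complex.ofReal_re] using h4

end
end

section
/- Let δ_k = ((a − b)/(a + b))^k. If H = ∪_i H_i is a vertex-disjoint union of cycles, where H_i is a cycle of length k_i, then Σ_{σ ∈ {±1}^{V(H)}} Π_{(u,v) ∈ E(H)} w_{uv}(σ) = 2^{|V(H)|} · Π_i (1 + δ_{k_i}), where w_{uv}(σ) = 2a/(a+b) if σ_u = σ_v and 2b/(a+b) otherwise. -/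
open Filter
open scoped Classical

noncomputable section

lemma path_sum (d : ℝ) (n : ℕ) : ∀ f : Bool → Bool → ℝ,
    ∑ σ : Fin (n + 1) → Bool, (∏ j : Fin n,
      (if σ j.castSucc = σ j.succ then 1 + d else 1 - d)) * f (σ 0) (σ (Fin.last n))
    = 2 ^ n / 2 * ((1 + d ^ n) * (f true true + f false false)
        + (1 - d ^ n) * (f true false + f false true)) := by
  induction n with
  | zero =>
    intro f
    rw [← (Equiv.funUnique (Fin 1) Bool).symm.sum_comp]
    simp
    ring
  | succ n ih =>
    intro f
    rw [← (Fin.consEquiv (fun _ : Fin (n + 2) => Bool)).sum_comp, Fintype.sum_prod_type]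
    have key : ∀ x : Bool, ∑ τ : Fin (n + 1) → Bool,
        (∏ j : Fin (n + 1), (if (Fin.consEquiv (fun _ : Fin (n + 2) => Bool)) (x, τ) j.castSucc
          = (Fin.consEquiv (fun _ : Fin (n + 2) => Bool)) (x, τ) j.succ then 1 + d else 1 - d)) *
        f ((Fin.consEquiv (fun _ : Fin (n + 2) => Bool)) (x, τ) 0)
          ((Fin.consEquiv (fun _ : Fin (n + 2) => Bool)) (x, τ) (Fin.last (n + 1)))
        = ∑ τ : Fin (n + 1) → Bool, (∏ j : Fin n,
          (if τ j.castSucc = τ j.succ then 1 + d else 1 - d)) *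
          (fun u v => (if x = u then 1 + d else 1 - d) * f x v) (τ 0) (τ (Fin.last n)) := by
      intro x
      refine Finset.sum_congr rfl fun τ _ => ?_
      rw [Fin.prod_univ_succ, ← Fin.succ_last]
      simp only [Fin.consEquiv_apply, Fin.cons_zero, Fin.cons_succ, Fin.castSucc_zero,
        ← Fin.succ_castSucc]
      ring
    refine (Finset.sum_congr rfl fun x _ => (key x).trans (ih (fun u v => (if x = u then 1 + d else 1 - d) * f x v))).trans ?_
    simp
    ring

lemma cycle_sum (d : ℝ) (n : ℕ) (hn : 3 ≤ n) :
    ∑ σ : Fin n → Bool, ∏ j : Fin n,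
      (if σ j = σ ⟨(j.val + 1) % n, Nat.mod_lt _ j.pos⟩ then 1 + d else 1 - d)
    = 2 ^ n * (1 + d ^ n) := by
  obtain ⟨m, rfl⟩ : ∃ m, n = m + 1 := ⟨n - 1, by omega⟩
  have h := path_sum d m (fun u v => if v = u then 1 + d else 1 - d)
  refine (Finset.sum_congr rfl fun σ _ => ?_).trans (h.trans ?_)
  · rw [Fin.prod_univ_castSucc]
    have h1 : ∀ j : Fin m, (⟨(j.castSucc.val + 1) % (m + 1), Nat.mod_lt _ j.castSucc.pos⟩ :
        Fin (m + 1)) = j.succ := by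
      intro j
      ext
      simp [Nat.mod_eq_of_lt]
    have h2 : (⟨((Fin.last m).val + 1) % (m + 1), Nat.mod_lt _ (Fin.last m).pos⟩ :
        Fin (m + 1)) = 0 := by
      ext
      simp
    simp only [h1, h2]
  · simp
    ring

/-- Let `δ_k = ((a − b)/(a + b))^k`. If `H = ∪_i H_i` is a vertex-disjoint
union of cycles, where `H_i` is a cycle of length `k_i` (here the vertex set of `H` is the
disjoint union `Σ i, Fin (k i)`, and the edges of `H_i` are `(j, j+1 mod k_i)`), then
`Σ_{σ ∈ {±1}^{V(H)}} Π_{(u,v) ∈ E(H)} w_{uv}(σ) = 2^{|V(H)|} · Π_i (1 + δ_{k_i})`,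
where `w_{uv}(σ) = 2a/(a+b)` if `σ_u = σ_v` and `2b/(a+b)` otherwise. -/
theorem statement18 (a b : ℝ) (hb : 0 < b) (hba : b < a)
    (ι : Type*) [Fintype ι] [DecidableEq ι] (k : ι → ℕ) (hk : ∀ i, 3 ≤ k i) :
    ∑ σ : (Σ i : ι, Fin (k i)) → Bool, ∏ i : ι, ∏ j : Fin (k i),
      (if σ ⟨i, j⟩ = σ ⟨i, ⟨(j.val + 1) % k i, Nat.mod_lt _ j.pos⟩⟩
        then 2 * a / (a + b) else 2 * b / (a + b))
    = 2 ^ (∑ i : ι, k i) * ∏ i : ι, (1 + ((a - b) / (a + b)) ^ k i) := by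
  have hab : a + b ≠ 0 := by linarith
  have hp : 2 * a / (a + b) = 1 + (a - b) / (a + b) := by field_simp; ring
  have hq : 2 * b / (a + b) = 1 - (a - b) / (a + b) := by field_simp; ring
  rw [hp, hq]
  generalize (a - b) / (a + b) = d
  rw [← Finset.prod_pow_eq_pow_sum, ← Finset.prod_mul_distrib]
  rw [← Finset.prod_congr rfl fun i _ => cycle_sum d (k i) (hk i)]
  rw [Finset.prod_univ_sum, Fintype.piFinset_univ]
  rw [← (Equiv.piCurry (fun (i : ι) (_ : Fin (k i)) => Bool)).sum_comp]
  rfl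

end
end
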